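/- arXiv:2310.12728 — 8 statements merged into one kernel-verified Lean document; each statement's English description precedes it below -/
import Mathlib

section
/- Let H be a Hopf algebra over a field k and let B be a left ideal coideal of H. Let π : H → H/B be the canonical k-linear quotient map. Then the set of coinvariants ^{co H/B}H := {h ∈ H : (π ⊗ id)(Δ(h)) = π(1_H) ⊗ h} is a right coideal subalgebra of H: it is a subalgebra of H and Δ maps it into (^{co H/B}H) ⊗ H. -/
open TensorProduct

/-- The set of coinvariants `^{co H/B}H = {h ∈ H : (π ⊗ id)(Δ h) = π(1) ⊗ h}`,
where `π : H → H/B` is the canonical quotient map. -/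
noncomputable def coinvariants (k H : Type*) [Field k] [Ring H] [HopfAlgebra k H]
    (B : Submodule k H) : Set H :=
  {h : H | TensorProduct.map B.mkQ LinearMap.id (Coalgebra.comul (R := k) h)
    = B.mkQ 1 ⊗ₜ[k] h}

theorem aux_mem (k H : Type*) [Field k] [Ring H] [HopfAlgebra k H]
    (B : Submodule k H) (h : H) : h ∈ coinvariants k H B ↔
      B.mkQ.rTensor H (Coalgebra.comul (R := k) h - 1 ⊗ₜ[k] h) = 0 := by
  rw [map_sub, sub_eq_zero, LinearMap.rTensor_tmul]
  rfl

theorem aux_left (k H : Type*) [Field k] [Ring H] [HopfAlgebra k H]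
    (B : Submodule k H) (hBideal : ∀ (h : H), ∀ b ∈ B, h * b ∈ B)
    (u v : H ⊗[k] H) (hv : B.mkQ.rTensor H v = 0) : B.mkQ.rTensor H (u * v) = 0 := by
  have hex : Function.Exact B.subtype B.mkQ := LinearMap.exact_subtype_mkQ B
  obtain ⟨w, rfl⟩ := ((Module.Flat.rTensor_exact H hex) v).1 hv
  clear hv
  induction u using TensorProduct.induction_on with
  | zero => simp
  | add a b ha hb => rw [add_mul, map_add, ha, hb, add_zero]
  | tmul a b =>
    induction w using TensorProduct.induction_on with
    | zero => simp
    | add c d hc hd => rw [map_add, mul_add, map_add, hc, hd, add_zero]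
    | tmul c d =>
      rw [LinearMap.rTensor_tmul, Algebra.TensorProduct.tmul_mul_tmul, LinearMap.rTensor_tmul]
      have : B.mkQ (a * B.subtype c) = 0 := by
        rw [Submodule.mkQ_apply, Submodule.Quotient.mk_eq_zero]
        exact hBideal a c c.2
      rw [this, TensorProduct.zero_tmul]

theorem aux_right (k H : Type*) [Field k] [Ring H] [HopfAlgebra k H]
    (B : Submodule k H) (y : H)
    (v : H ⊗[k] H) : B.mkQ.rTensor H (v * (1 ⊗ₜ[k] y)) =
      (LinearMap.mulRight k y).lTensor (H ⧸ B) (B.mkQ.rTensor H v) := by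
  induction v using TensorProduct.induction_on with
  | zero => simp
  | add a b ha hb => rw [add_mul, map_add, ha, hb, map_add, map_add]
  | tmul a b => simp [Algebra.TensorProduct.tmul_mul_tmul]

theorem aux_coideal (k H : Type*) [Field k] [Ring H] [HopfAlgebra k H]
    (B : Submodule k H) (x : H) (hx : x ∈ coinvariants k H B) :
    Coalgebra.comul (R := k) x ∈ Submodule.span k
        {z : H ⊗[k] H | ∃ a ∈ coinvariants k H B, ∃ h' : H, z = a ⊗ₜ[k] h'} := by
  let f : H →ₗ[k] (H ⧸ B) ⊗[k] H :=
    B.mkQ.rTensor H ∘ₗ (Coalgebra.comul (R := k) - TensorProduct.mk k H H 1)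
  have hf : ∀ h, f h = 0 ↔ h ∈ coinvariants k H B := fun h => (aux_mem k H B h).symm
  have hex : Function.Exact (LinearMap.ker f).subtype f := LinearMap.exact_subtype_ker_map f
  have key : ∀ u : H ⊗[k] H, TensorProduct.assoc k _ _ _ (f.rTensor H u) =
      B.mkQ.rTensor (H ⊗[k] H) (TensorProduct.assoc k _ _ _
        ((Coalgebra.comul (R := k)).rTensor H u)) - B.mkQ 1 ⊗ₜ[k] u := by
    intro u
    induction u using TensorProduct.induction_on with
    | zero => simp
    | add a b ha hb =>
      simp only [map_add, TensorProduct.tmul_add, ha, hb]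
      abel
    | tmul a b =>
      have h2 : ∀ w : H ⊗[k] H, TensorProduct.assoc k _ _ _ (B.mkQ.rTensor H w ⊗ₜ[k] b) =
          B.mkQ.rTensor (H ⊗[k] H) (TensorProduct.assoc k _ _ _ (w ⊗ₜ[k] b)) := by
        intro w
        induction w using TensorProduct.induction_on with
        | zero => simp
        | add c d hc hd => simp only [map_add, TensorProduct.add_tmul, hc, hd]
        | tmul c d => simp
      simp only [LinearMap.rTensor_tmul, f, LinearMap.comp_apply]
      rw [h2]
      simp [TensorProduct.sub_tmul]
  have comm : ∀ w : H ⊗[k] H, B.mkQ.rTensor (H ⊗[k] H)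
      ((Coalgebra.comul (R := k)).lTensor H w) =
      (Coalgebra.comul (R := k)).lTensor (H ⧸ B) (B.mkQ.rTensor H w) := by
    intro w
    rw [← LinearMap.comp_apply, ← LinearMap.comp_apply, LinearMap.rTensor_comp_lTensor,
      LinearMap.lTensor_comp_rTensor]
  have h0 : f.rTensor H (Coalgebra.comul (R := k) x) = 0 := by
    apply (TensorProduct.assoc k _ _ _).injective
    have hx' : B.mkQ.rTensor H (Coalgebra.comul (R := k) x) = B.mkQ 1 ⊗ₜ[k] x := hx
    rw [key, Coalgebra.coassoc_apply, comm, hx', LinearMap.lTensor_tmul, sub_self, map_zero]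
  obtain ⟨w, hw⟩ := ((Module.Flat.rTensor_exact H hex) _).1 h0
  rw [← hw]
  clear hw
  induction w using TensorProduct.induction_on with
  | zero => simp
  | add c d hc hd =>
    rw [map_add]
    exact add_mem hc hd
  | tmul c d =>
    exact Submodule.subset_span ⟨c, (hf c).1 c.2, d, rfl⟩

/-- if `B` is a left ideal coideal of a Hopf algebra `H`, then the set of
coinvariants `{h ∈ H : (π ⊗ id)(Δ h) = π(1) ⊗ h}` (where `π : H → H/B` is the quotient map)
is a right coideal subalgebra of `H`: it is a subalgebra (contains `1`, closed under
multiplication, addition and scalar multiplication) and `Δ` maps it into itself tensor `H`. -/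
theorem stmt1 (k H : Type*) [Field k] [Ring H] [HopfAlgebra k H]
    (B : Submodule k H)
    (hBideal : ∀ (h : H), ∀ b ∈ B, h * b ∈ B)
    (hBcoideal : ∀ b ∈ B, Coalgebra.comul (R := k) b ∈
      Submodule.span k {z : H ⊗[k] H | ∃ b' ∈ B, ∃ h : H, z = b' ⊗ₜ[k] h}
      ⊔ Submodule.span k {z : H ⊗[k] H | ∃ h : H, ∃ b' ∈ B, z = h ⊗ₜ[k] b'})
    (hBcounit : ∀ b ∈ B, Coalgebra.counit (R := k) b = 0) :
    (1 : H) ∈ coinvariants k H B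
    ∧ (∀ x ∈ coinvariants k H B, ∀ y ∈ coinvariants k H B, x * y ∈ coinvariants k H B)
    ∧ (∀ x ∈ coinvariants k H B, ∀ y ∈ coinvariants k H B, x + y ∈ coinvariants k H B)
    ∧ (∀ (c : k), ∀ x ∈ coinvariants k H B, c • x ∈ coinvariants k H B)
    ∧ (∀ x ∈ coinvariants k H B, Coalgebra.comul (R := k) x ∈ Submodule.span k
        {z : H ⊗[k] H | ∃ a ∈ coinvariants k H B, ∃ h' : H, z = a ⊗ₜ[k] h'}) := by
  refine ⟨?_, ?_, ?_, ?_, aux_coideal k H B⟩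
  · rw [aux_mem, Bialgebra.comul_one, Algebra.TensorProduct.one_def, sub_self, map_zero]
  · intro x hx y hy
    rw [aux_mem] at *
    have e : Coalgebra.comul (R := k) (x * y) - 1 ⊗ₜ[k] (x * y) =
        Coalgebra.comul (R := k) x * (Coalgebra.comul (R := k) y - 1 ⊗ₜ[k] y) +
        (Coalgebra.comul (R := k) x - 1 ⊗ₜ[k] x) * (1 ⊗ₜ[k] y) := by
      rw [Bialgebra.comul_mul, mul_sub, sub_mul, Algebra.TensorProduct.tmul_mul_tmul, one_mul]
      abel
    rw [e, map_add, aux_left k H B hBideal _ _ hy, aux_right, hx, map_zero, add_zero]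
  · intro x hx y hy
    rw [aux_mem] at *
    rw [map_add, TensorProduct.tmul_add, add_sub_add_comm, map_add, hx, hy, add_zero]
  · intro c x hx
    rw [aux_mem] at *
    rw [map_smul, TensorProduct.tmul_smul, ← smul_sub, map_smul, hx, smul_zero]
end

section
/- Let H be a Hopf algebra over a field k. For every right coideal subalgebra A of H and every left ideal coideal B of H one has: H·A⁺ ⊆ B if and only if A ⊆ ^{co H/B}H. In other words, the assignments A ↦ H·A⁺ and B ↦ ^{co H/B}H form a monotone Galois connection between the poset of right coideal subalgebras of H and the poset of left ideal coideals of H. -/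
open TensorProduct

/-- for a Hopf algebra `H` over a field `k`, for every right coideal
subalgebra `A` of `H` and every left ideal coideal `B` of `H` one has
`H·A⁺ ⊆ B ↔ A ⊆ ^{co H/B}H`; that is, `A ↦ H·A⁺` and `B ↦ ^{co H/B}H` form a monotone
Galois connection. -/
theorem stmt2 (k H : Type*) [Field k] [Ring H] [HopfAlgebra k H]
    (A : Subalgebra k H)
    (hA : ∀ a ∈ A, Coalgebra.comul (R := k) a ∈
      Submodule.span k {x : H ⊗[k] H | ∃ b ∈ A, ∃ h : H, x = b ⊗ₜ[k] h})
    (B : Submodule k H)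
    (hBideal : ∀ (h : H), ∀ b ∈ B, h * b ∈ B)
    (hBcoideal : ∀ b ∈ B, Coalgebra.comul (R := k) b ∈
      Submodule.span k {z : H ⊗[k] H | ∃ b' ∈ B, ∃ h : H, z = b' ⊗ₜ[k] h}
      ⊔ Submodule.span k {z : H ⊗[k] H | ∃ h : H, ∃ b' ∈ B, z = h ⊗ₜ[k] b'})
    (hBcounit : ∀ b ∈ B, Coalgebra.counit (R := k) b = 0) :
    Submodule.span k {x : H | ∃ (h : H) (a : H), a ∈ A ∧ Coalgebra.counit (R := k) a = 0
        ∧ x = h * a} ≤ B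
    ↔ ∀ a ∈ A, TensorProduct.map B.mkQ LinearMap.id (Coalgebra.comul (R := k) a)
        = B.mkQ 1 ⊗ₜ[k] a := by
  constructor
  · intro hle a ha
    have key : ∀ b ∈ A, B.mkQ b = Coalgebra.counit (R := k) b • B.mkQ 1 := by
      intro b hb
      rw [← map_smul, ← sub_eq_zero, ← map_sub, Submodule.mkQ_apply,
        Submodule.Quotient.mk_eq_zero]
      apply hle
      apply Submodule.subset_span
      refine ⟨1, _, A.sub_mem hb (A.smul_mem A.one_mem _), ?_, (one_mul _).symm⟩
      simp
    let g : k →ₗ[k] (H ⧸ B) := LinearMap.toSpanSingleton k (H ⧸ B) (B.mkQ 1)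
    have h1 : ∀ z ∈ Submodule.span k {x : H ⊗[k] H | ∃ b ∈ A, ∃ h : H, x = b ⊗ₜ[k] h},
        TensorProduct.map B.mkQ LinearMap.id z
          = g.rTensor H ((Coalgebra.counit (R := k) (A := H)).rTensor H z) := by
      intro z hz
      induction hz using Submodule.span_induction with
      | mem x hx =>
        obtain ⟨b, hb, h, rfl⟩ := hx
        rw [TensorProduct.map_tmul, key b hb, LinearMap.rTensor_tmul, LinearMap.rTensor_tmul]
        simp only [g, LinearMap.toSpanSingleton_apply, LinearMap.id_apply]
      | zero => simp only [map_zero]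
      | add x y _ _ hx hy => simp only [map_add, hx, hy]
      | smul c x _ hx => simp only [map_smul, hx]
    rw [h1 _ (hA a ha), Coalgebra.rTensor_counit_comul, LinearMap.rTensor_tmul]
    simp only [g, LinearMap.toSpanSingleton_apply, one_smul]
  · intro hco
    rw [Submodule.span_le]
    rintro _ ⟨h, a, ha, ha0, rfl⟩
    apply hBideal
    have h2 := congrArg (fun z => TensorProduct.rid k (H ⧸ B)
      ((Coalgebra.counit (R := k) (A := H)).lTensor (H ⧸ B) z)) (hco a ha)
    have h3 : ∀ z : H ⊗[k] H, (Coalgebra.counit (R := k) (A := H)).lTensor (H ⧸ B)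
        (TensorProduct.map B.mkQ LinearMap.id z)
        = B.mkQ.rTensor k ((Coalgebra.counit (R := k) (A := H)).lTensor H z) := by
      intro z
      induction z with
      | zero => simp only [map_zero]
      | add x y hx hy => simp only [map_add, hx, hy]
      | tmul x y => simp
    simp only [h3, Coalgebra.lTensor_counit_comul, LinearMap.lTensor_tmul, ha0,
      LinearMap.rTensor_tmul, TensorProduct.rid_tmul, one_smul, zero_smul] at h2
    rwa [Submodule.mkQ_apply, Submodule.Quotient.mk_eq_zero] at h2
end

section
/- Let H be a Hopf algebra over a field k and let A be a right H-comodule algebra with coaction ρ : A → A ⊗ H. Let I be a two-sided ideal of A possessing a unit e, i.e. x·e = x = e·x for all x ∈ I. Then the map ρ_I(x) := ρ(x)·(e ⊗ 1_H) takes values in I ⊗ H and defines a symmetric right partial coaction of H on I: for all x, y ∈ I, (PC1) (id ⊗ ε)(ρ_I(x)) = x; (PC2) ρ_I(x·y) = ρ_I(x)·ρ_I(y); (PC3) (ρ_I(e) ⊗ 1_H)·((id ⊗ Δ)(ρ_I(x))) = (ρ_I ⊗ id)(ρ_I(x)) = ((id ⊗ Δ)(ρ_I(x)))·(ρ_I(e)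 ⊗ 1_H). -/
open TensorProduct LinearMap

theorem aux_D {k H A : Type*} [Field k] [Ring H] [HopfAlgebra k H] [Ring A] [Algebra k A]
    (e : A) (z : A ⊗[k] H) :
    (TensorProduct.assoc k A H H).symm
      ((LinearMap.lTensor A (Coalgebra.comul (R := k))) (z * (e ⊗ₜ[k] (1 : H))))
    = (TensorProduct.assoc k A H H).symm
      ((LinearMap.lTensor A (Coalgebra.comul (R := k))) z) * ((e ⊗ₜ[k] (1 : H)) ⊗ₜ[k] (1 : H)) := by
  induction z using TensorProduct.induction_on with
  | zero => simp
  | add x y hx hy => simp only [add_mul, map_add, hx, hy]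
  | tmul a h =>
    simp only [Algebra.TensorProduct.tmul_mul_tmul, mul_one, LinearMap.lTensor_tmul]
    induction (Coalgebra.comul (R := k) h) using TensorProduct.induction_on with
    | zero => simp
    | add x y hx hy => simp only [tmul_add, add_mul, map_add, hx, hy]
    | tmul b c => simp

theorem aux_R {k H A B : Type*} [Field k] [Ring H] [Algebra k H] [Ring A] [Algebra k A]
    [Ring B] [Algebra k B] (ρ : A →ₐ[k] B) (c : B) (z : A ⊗[k] H) :
    (LinearMap.rTensor H ((LinearMap.mulRight k c).comp ρ.toLinearMap)) z
      = Algebra.TensorProduct.map ρ (AlgHom.id k H) z * (c ⊗ₜ[k] (1 : H)) := by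
  induction z using TensorProduct.induction_on with
  | zero => simp
  | add x y hx hy => simp only [add_mul, map_add, hx, hy]
  | tmul a h => simp

theorem aux_C {k H A : Type*} [Field k] [Ring H] [Algebra k H] [Ring A] [Algebra k A]
    (e : A) (h : ∀ a : A, e * a = a * e) (z : A ⊗[k] H) :
    (e ⊗ₜ[k] (1 : H)) * z = z * (e ⊗ₜ[k] (1 : H)) := by
  induction z using TensorProduct.induction_on with
  | zero => simp
  | add x y hx hy => simp only [add_mul, mul_add, hx, hy]
  | tmul a b => simp [h]

/-- if `A` is a right `H`-comodule algebra with coaction `ρ` and `I` is a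
two-sided ideal of `A` with a unit `e`, then `ρ_I(x) := ρ(x)·(e ⊗ 1)` takes values in
`I ⊗ H` and is a symmetric right partial coaction of `H` on `I` (axioms (PC1)-(PC3)). -/
theorem stmt3 (k H A : Type*) [Field k] [Ring H] [HopfAlgebra k H]
    [Ring A] [Algebra k A]
    (ρ : A →ₐ[k] A ⊗[k] H)
    (hcounital : ∀ a : A,
      (TensorProduct.rid k A) ((LinearMap.lTensor A (Coalgebra.counit (R := k))) (ρ a)) = a)
    (hcoassoc : ∀ a : A,
      (LinearMap.rTensor H ρ.toLinearMap) (ρ a)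
        = (TensorProduct.assoc k A H H).symm
            ((LinearMap.lTensor A (Coalgebra.comul (R := k))) (ρ a)))
    (I : Submodule k A)
    (hIl : ∀ (a : A), ∀ x ∈ I, a * x ∈ I)
    (hIr : ∀ (a : A), ∀ x ∈ I, x * a ∈ I)
    (e : A) (heI : e ∈ I)
    (he : ∀ x ∈ I, x * e = x ∧ e * x = x) :
    -- `ρ_I` takes values in `I ⊗ H`
    (∀ x ∈ I, ρ x * (e ⊗ₜ[k] (1 : H)) ∈
      Submodule.span k {z : A ⊗[k] H | ∃ i ∈ I, ∃ h : H, z = i ⊗ₜ[k] h})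
    -- (PC1)
    ∧ (∀ x ∈ I,
      (TensorProduct.rid k A) ((LinearMap.lTensor A (Coalgebra.counit (R := k)))
        (ρ x * (e ⊗ₜ[k] (1 : H)))) = x)
    -- (PC2)
    ∧ (∀ x ∈ I, ∀ y ∈ I,
      ρ (x * y) * (e ⊗ₜ[k] (1 : H)) = (ρ x * (e ⊗ₜ[k] (1 : H))) * (ρ y * (e ⊗ₜ[k] (1 : H))))
    -- (PC3): (ρ_I(e) ⊗ 1)·((id ⊗ Δ)(ρ_I x)) = (ρ_I ⊗ id)(ρ_I x) = ((id ⊗ Δ)(ρ_I x))·(ρ_I(e) ⊗ 1)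
    ∧ (∀ x ∈ I,
      ((ρ e * (e ⊗ₜ[k] (1 : H))) ⊗ₜ[k] (1 : H))
          * ((TensorProduct.assoc k A H H).symm
              ((LinearMap.lTensor A (Coalgebra.comul (R := k))) (ρ x * (e ⊗ₜ[k] (1 : H)))))
        = (LinearMap.rTensor H
            ((LinearMap.mulRight k (e ⊗ₜ[k] (1 : H))).comp ρ.toLinearMap))
            (ρ x * (e ⊗ₜ[k] (1 : H)))
      ∧ (LinearMap.rTensor H
            ((LinearMap.mulRight k (e ⊗ₜ[k] (1 : H))).comp ρ.toLinearMap))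
            (ρ x * (e ⊗ₜ[k] (1 : H)))
        = ((TensorProduct.assoc k A H H).symm
              ((LinearMap.lTensor A (Coalgebra.comul (R := k))) (ρ x * (e ⊗ₜ[k] (1 : H)))))
          * ((ρ e * (e ⊗ₜ[k] (1 : H))) ⊗ₜ[k] (1 : H))) := by
  have hc : ∀ a : A, e * a = a * e := fun a => by
    rw [← (he _ (hIr a e heI)).1, mul_assoc, (he _ (hIl a e heI)).2]
  have hee : e * e = e := (he e heI).1
  have hC := aux_C (k := k) (H := H) e hc
  have hCC := aux_C (k := k) (H := H) (e ⊗ₜ[k] (1 : H)) hC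
  have hE : (e ⊗ₜ[k] (1 : H)) * (e ⊗ₜ[k] (1 : H)) = e ⊗ₜ[k] (1 : H) := by simp [hee]
  refine ⟨fun x _ => ?_, fun x hx => ?_, fun x _ y _ => ?_, fun x hx => ?_⟩
  · induction ρ x using TensorProduct.induction_on with
    | zero => simp
    | add x y hx hy => rw [add_mul]; exact add_mem hx hy
    | tmul a h => exact Submodule.subset_span ⟨a * e, hIl a e heI, h, by simp⟩
  · have key : ∀ z : A ⊗[k] H,
        (TensorProduct.rid k A) ((LinearMap.lTensor A (Coalgebra.counit (R := k)))
          (z * (e ⊗ₜ[k] (1 : H)))) =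
        (TensorProduct.rid k A) ((LinearMap.lTensor A (Coalgebra.counit (R := k))) z) * e := by
      intro z
      induction z using TensorProduct.induction_on with
      | zero => simp
      | add x y hx hy => simp only [add_mul, map_add, hx, hy]
      | tmul a h => simp
    rw [key, hcounital, (he x hx).1]
  · rw [map_mul, mul_assoc (ρ x) (e ⊗ₜ[k] (1 : H)), ← mul_assoc _ (ρ y), hC (ρ y),
      mul_assoc (ρ y), hE, mul_assoc]
  · have h1 : (LinearMap.rTensor H ρ.toLinearMap) (ρ x)
        = Algebra.TensorProduct.map ρ (AlgHom.id k H) (ρ x) := rfl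
    rw [aux_D, ← hcoassoc, h1, aux_R]
    have h2 : (ρ e * (e ⊗ₜ[k] (1 : H))) ⊗ₜ[k] (1 : H) =
        Algebra.TensorProduct.map ρ (AlgHom.id k H) (e ⊗ₜ[k] (1 : H))
          * ((e ⊗ₜ[k] (1 : H)) ⊗ₜ[k] (1 : H)) := by simp
    have hEE : ((e ⊗ₜ[k] (1 : H)) ⊗ₜ[k] (1 : H)) * ((e ⊗ₜ[k] (1 : H)) ⊗ₜ[k] (1 : H))
        = (e ⊗ₜ[k] (1 : H)) ⊗ₜ[k] (1 : H) := by
      rw [Algebra.TensorProduct.tmul_mul_tmul, hE, mul_one]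
    rw [h2, map_mul]
    have h3 := congrArg (Algebra.TensorProduct.map ρ (AlgHom.id k H)) (hC (ρ x))
    rw [map_mul, map_mul] at h3
    generalize Algebra.TensorProduct.map ρ (AlgHom.id k H) (ρ x) = X at *
    generalize Algebra.TensorProduct.map ρ (AlgHom.id k H) (e ⊗ₜ[k] (1 : H)) = Y at *
    generalize (e ⊗ₜ[k] (1 : H)) ⊗ₜ[k] (1 : H) = E at *
    constructor
    · rw [mul_assoc Y, ← mul_assoc E, hCC X, mul_assoc X, hEE, ← mul_assoc, h3]
    · rw [mul_assoc X E, ← mul_assoc E, hCC Y, mul_assoc Y, hEE, mul_assoc]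
end

section
/- Let H be a Hopf algebra over a field k, let e ∈ H be an idempotent (e² = e), and let A be the smallest right coideal subalgebra of H containing e. Then e is central in A (i.e. e·a = a·e for all a ∈ A) if and only if e·e_{(1)} ⊗ e_{(2)} = e_{(1)}·e ⊗ e_{(2)} in H ⊗ H, i.e. (e ⊗ 1)·Δ(e) = Δ(e)·(e ⊗ 1). -/
open TensorProduct

private theorem aux_ell {k H : Type*} [Field k] [Ring H] [HopfAlgebra k H] (e : H) (x : H ⊗[k] H) :
    (LinearMap.mulLeft k e - LinearMap.mulRight k e).rTensor H x
      = (e ⊗ₜ[k] (1 : H)) * x - x * (e ⊗ₜ[k] (1 : H)) := by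
  induction x with
  | zero => simp
  | tmul a b => simp [TensorProduct.sub_tmul]
  | add x y hx hy => rw [map_add, hx, hy, mul_add, add_mul]; abel

private theorem aux_comm {k H : Type*} [Field k] [Ring H] [HopfAlgebra k H] (l : H →ₗ[k] H) (a : H)
    (h : l.rTensor H (Coalgebra.comul (R := k) a) = 0) :
    (l.rTensor H ∘ₗ Coalgebra.comul (R := k)).rTensor H (Coalgebra.comul (R := k) a) = 0 := by
  have h1 : ∀ y : (H ⊗[k] H) ⊗[k] H, TensorProduct.assoc k H H H ((l.rTensor H).rTensor H y)
      = l.rTensor (H ⊗[k] H) (TensorProduct.assoc k H H H y) := by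
    intro y
    have : (TensorProduct.assoc k H H H).toLinearMap ∘ₗ (l.rTensor H).rTensor H
      = l.rTensor (H ⊗[k] H) ∘ₗ (TensorProduct.assoc k H H H).toLinearMap := by
      ext; simp
    exact LinearMap.congr_fun this y
  apply (TensorProduct.assoc k H H H).injective
  rw [map_zero, LinearMap.rTensor_comp_apply, h1, Coalgebra.coassoc_apply,
    ← LinearMap.comp_apply, LinearMap.rTensor_comp_lTensor, ← LinearMap.lTensor_comp_rTensor,
    LinearMap.comp_apply, h, map_zero]

/-- let `e` be an idempotent of a Hopf algebra `H` and `A` the smallest right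
coideal subalgebra of `H` containing `e`. Then `e` is central in `A` if and only if
`(e ⊗ 1)·Δ(e) = Δ(e)·(e ⊗ 1)`. -/
theorem stmt4 (k H : Type*) [Field k] [Ring H] [HopfAlgebra k H]
    (e : H) (he : e * e = e)
    (A : Subalgebra k H)
    (hA : ∀ a ∈ A, Coalgebra.comul (R := k) a ∈
      Submodule.span k {x : H ⊗[k] H | ∃ b ∈ A, ∃ h : H, x = b ⊗ₜ[k] h})
    (heA : e ∈ A)
    (hmin : ∀ A' : Subalgebra k H,
      (∀ a ∈ A', Coalgebra.comul (R := k) a ∈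
        Submodule.span k {x : H ⊗[k] H | ∃ b ∈ A', ∃ h : H, x = b ⊗ₜ[k] h}) →
      e ∈ A' → A ≤ A') :
    (∀ a ∈ A, e * a = a * e) ↔
      (e ⊗ₜ[k] (1 : H)) * Coalgebra.comul (R := k) e
        = Coalgebra.comul (R := k) e * (e ⊗ₜ[k] (1 : H)) := by
  constructor
  · intro hc
    have := hA e heA
    generalize Coalgebra.comul (R := k) e = x at this
    induction this using Submodule.span_induction with
    | mem x hx =>
      obtain ⟨b, hb, h, rfl⟩ := hx
      simp [hc b hb]
    | zero => simp
    | add x y _ _ hx hy => rw [mul_add, add_mul, hx, hy]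
    | smul c x _ hx => rw [mul_smul_comm, smul_mul_assoc, hx]
  · intro hc
    let A' : Subalgebra k H :=
      (Subalgebra.centralizer k {e ⊗ₜ[k] (1 : H)}).comap (Bialgebra.comulAlgHom k H)
    have hmem : ∀ a, a ∈ A' ↔ (e ⊗ₜ[k] (1 : H)) * Coalgebra.comul (R := k) a
        = Coalgebra.comul (R := k) a * (e ⊗ₜ[k] (1 : H)) := by
      intro a
      simp [A', Subalgebra.mem_centralizer_iff]
    set l : H →ₗ[k] H := LinearMap.mulLeft k e - LinearMap.mulRight k e with hl
    have hmem2 : ∀ a, a ∈ A' ↔ l.rTensor H (Coalgebra.comul (R := k) a) = 0 := by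
      intro a
      rw [hmem, hl, aux_ell, sub_eq_zero]
    have hle : A ≤ A' := by
      apply hmin
      · intro a ha
        have h0 := aux_comm l a ((hmem2 a).1 ha)
        set φ := l.rTensor H ∘ₗ Coalgebra.comul (R := k) with hφ
        have hex : Function.Exact (φ.ker.subtype.rTensor H) (φ.rTensor H) :=
          Module.Flat.rTensor_exact H (LinearMap.exact_subtype_ker_map φ)
        obtain ⟨y, hy⟩ := (hex _).1 h0
        rw [← hy]
        clear hy
        induction y with
        | zero => simp
        | tmul b h =>
          exact Submodule.subset_span ⟨b, (hmem2 b).2 b.2, h, by simp⟩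
        | add x y hx hy => rw [map_add]; exact add_mem hx hy
      · exact (hmem e).2 hc
    intro a ha
    have h0 := (hmem2 a).1 (hle ha)
    have h1 := congrArg ((Coalgebra.counit (R := k) (A := H)).lTensor H) h0
    rw [← LinearMap.comp_apply, LinearMap.lTensor_comp_rTensor, ← LinearMap.rTensor_comp_lTensor,
      LinearMap.comp_apply, Coalgebra.lTensor_counit_comul, map_zero] at h1
    have h2 := congrArg (TensorProduct.rid k H) h1
    simpa [hl, sub_eq_zero] using h2
end

section
/- Let H be a Hopf algebra over a field k and let e ∈ H be a subcentral idempotent. Let H·e = {h·e : h ∈ H} be the left ideal generated by e. Then the k-linear map ρ_e : H·e → (H·e) ⊗ H defined by ρ_e(x) = x_{(1)}·e ⊗ x_{(2)} is well defined (ρ_e(x) ∈ (H·e) ⊗ H) and is a right partial H-comodule structure on H·e, i.e. it satisfies axioms (PCM1), (PCM2) and (PCM3). -/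
open TensorProduct LinearMap

variable (k H : Type*) [Field k] [Ring H] [HopfAlgebra k H]

/-- The map `ρ_e : x ↦ x₍₁₎·e ⊗ x₍₂₎`, as a linear endomap of the ambient space;
the claim of the theorem is that it restricts to a partial comodule structure on `H·e`. -/
noncomputable def rhoE (e : H) : H →ₗ[k] H ⊗[k] H :=
  (LinearMap.mulRight k (e ⊗ₜ[k] (1 : H))).comp (Coalgebra.comul (R := k))

/-- `ρ² = (ρ ⊗ id) ∘ ρ`, giving `m⁽⁰⁾⁽⁰⁾ ⊗ m⁽⁰⁾⁽¹⁾ ⊗ m⁽¹⁾`. -/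
noncomputable def rhoE2 (e : H) : H →ₗ[k] (H ⊗[k] H) ⊗[k] H :=
  (LinearMap.rTensor H (rhoE k H e)).comp (rhoE k H e)

/-- `ρ³ = (ρ ⊗ id ⊗ id) ∘ ρ²`, giving `m⁽⁰⁾⁽⁰⁾⁽⁰⁾ ⊗ m⁽⁰⁾⁽⁰⁾⁽¹⁾ ⊗ m⁽⁰⁾⁽¹⁾ ⊗ m⁽¹⁾`. -/
noncomputable def rhoE3 (e : H) : H →ₗ[k] ((H ⊗[k] H) ⊗[k] H) ⊗[k] H :=
  (LinearMap.rTensor H (LinearMap.rTensor H (rhoE k H e))).comp (rhoE2 k H e)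

/-- `(a ⊗ b) ⊗ c ↦ (a ⊗ b₍₁₎) ⊗ b₍₂₎·S(c)` : the left-hand side operation of (PCM2). -/
noncomputable def pcm2L : (H ⊗[k] H) ⊗[k] H →ₗ[k] (H ⊗[k] H) ⊗[k] H :=
  (LinearMap.lTensor (H ⊗[k] H) (LinearMap.mul' k H))
    ∘ₗ (TensorProduct.assoc k (H ⊗[k] H) H H).toLinearMap
    ∘ₗ (LinearMap.rTensor H ((TensorProduct.assoc k H H H).symm.toLinearMap))
    ∘ₗ (LinearMap.lTensor (H ⊗[k] (H ⊗[k] H)) (HopfAlgebra.antipode (R := k)))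
    ∘ₗ (LinearMap.rTensor H (LinearMap.lTensor H (Coalgebra.comul (R := k))))

/-- `((a ⊗ b) ⊗ c) ⊗ d ↦ (a ⊗ b) ⊗ c·S(d)` : the right-hand side operation of (PCM2). -/
noncomputable def pcm2R : ((H ⊗[k] H) ⊗[k] H) ⊗[k] H →ₗ[k] (H ⊗[k] H) ⊗[k] H :=
  (LinearMap.lTensor (H ⊗[k] H) (LinearMap.mul' k H))
    ∘ₗ (TensorProduct.assoc k (H ⊗[k] H) H H).toLinearMap
    ∘ₗ (LinearMap.lTensor ((H ⊗[k] H) ⊗[k] H) (HopfAlgebra.antipode (R := k)))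

/-- `(a ⊗ b) ⊗ c ↦ (a ⊗ b·S(c₍₁₎)) ⊗ c₍₂₎` : the left-hand side operation of (PCM3). -/
noncomputable def pcm3L : (H ⊗[k] H) ⊗[k] H →ₗ[k] (H ⊗[k] H) ⊗[k] H :=
  (LinearMap.rTensor H (LinearMap.lTensor H (LinearMap.mul' k H)))
    ∘ₗ (LinearMap.rTensor H (TensorProduct.assoc k H H H).toLinearMap)
    ∘ₗ (TensorProduct.assoc k (H ⊗[k] H) H H).symm.toLinearMap
    ∘ₗ (LinearMap.lTensor (H ⊗[k] H) (LinearMap.rTensor H (HopfAlgebra.antipode (R := k))))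
    ∘ₗ (LinearMap.lTensor (H ⊗[k] H) (Coalgebra.comul (R := k)))

/-- `((a ⊗ b) ⊗ c) ⊗ d ↦ (a ⊗ b·S(c)) ⊗ d` : the right-hand side operation of (PCM3). -/
noncomputable def pcm3R : ((H ⊗[k] H) ⊗[k] H) ⊗[k] H →ₗ[k] (H ⊗[k] H) ⊗[k] H :=
  LinearMap.rTensor H
    ((LinearMap.lTensor H (LinearMap.mul' k H))
      ∘ₗ (TensorProduct.assoc k H H H).toLinearMap
      ∘ₗ (LinearMap.lTensor (H ⊗[k] H) (HopfAlgebra.antipode (R := k))))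

/-- `m⁽⁰⁾ ⊗ m⁽¹⁾ ↦ m⁽⁰⁾·ε(m⁽¹⁾)`. -/
noncomputable def applyCounit : H ⊗[k] H →ₗ[k] H :=
  (TensorProduct.rid k H).toLinearMap ∘ₗ (LinearMap.lTensor H (Coalgebra.counit (R := k)))

namespace PCMaux

/-- comultiplication as an algebra map -/
noncomputable abbrev D : H →ₐ[k] H ⊗[k] H := Bialgebra.comulAlgHom k H

section gen
variable {k} {A B P : Type*} [Ring A] [Algebra k A] [Ring B] [Algebra k B] [Ring P] [Algebra k P]

/-- `f ⊗ id` -/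
noncomputable def X1 (f : A →ₐ[k] B) : A ⊗[k] H →ₐ[k] B ⊗[k] H :=
  Algebra.TensorProduct.map f (AlgHom.id k H)

@[simp] lemma X1_tmul (f : A →ₐ[k] B) (a : A) (h : H) : X1 H f (a ⊗ₜ h) = f a ⊗ₜ h := rfl

lemma X1_comp (g : B →ₐ[k] P) (f : A →ₐ[k] B) (y : A ⊗[k] H) :
    X1 H g (X1 H f y) = X1 H (g.comp f) y := by
  induction y with
  | zero => simp
  | tmul a h => simp
  | add a b ha hb => simp only [map_add, ha, hb]

variable (P) in
/-- `p ⊗ h ↦ p ⊗ h₁ ⊗ h₂` -/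
noncomputable def cP : P ⊗[k] H →ₐ[k] (P ⊗[k] H) ⊗[k] H :=
  ((Algebra.TensorProduct.assoc k k k P H H).symm : _ →ₐ[k] _).comp
    (Algebra.TensorProduct.map (AlgHom.id k P) (D k H))

lemma cP_tmul (p : P) (h : H) : cP H P (p ⊗ₜ[k] h) =
    (TensorProduct.assoc k P H H).symm (p ⊗ₜ Coalgebra.comul (R := k) h) := rfl

lemma cP_tmul_one (p : P) : cP H P (p ⊗ₜ[k] (1 : H)) = (p ⊗ₜ 1) ⊗ₜ 1 := by
  rw [cP_tmul, Bialgebra.comul_one, Algebra.TensorProduct.one_def]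
  rfl

lemma cP_nat (f : A →ₐ[k] P) (y : A ⊗[k] H) :
    cP H P (X1 H f y) = X1 H (X1 H f) (cP H A y) := by
  induction y with
  | zero => simp
  | add a b ha hb => simp only [map_add, ha, hb]
  | tmul a h =>
    rw [X1_tmul, cP_tmul, cP_tmul]
    induction Coalgebra.comul (R := k) h with
    | zero => simp
    | add a b ha hb => simp only [map_add, tmul_add, ha, hb]
    | tmul u v => simp

variable (P) in
/-- `p ⊗ c ⊗ d ↦ p ⊗ c S(d)` -/
noncomputable def muS : (P ⊗[k] H) ⊗[k] H →ₗ[k] P ⊗[k] H :=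
  (LinearMap.lTensor P (LinearMap.mul' k H))
    ∘ₗ (TensorProduct.assoc k P H H).toLinearMap
    ∘ₗ (LinearMap.lTensor (P ⊗[k] H) (HopfAlgebra.antipode (R := k)))

@[simp] lemma muS_tmul (p : P) (c d : H) :
    muS H P ((p ⊗ₜ[k] c) ⊗ₜ[k] d) = p ⊗ₜ (c * HopfAlgebra.antipode k d) := rfl

variable (P) in
/-- `p ⊗ h ↦ p ε(h)` -/
noncomputable def eP : P ⊗[k] H →ₗ[k] P :=
  (TensorProduct.rid k P).toLinearMap ∘ₗ (LinearMap.lTensor P (Coalgebra.counit (R := k)))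

@[simp] lemma eP_tmul (p : P) (h : H) :
    eP H P (p ⊗ₜ[k] h) = Coalgebra.counit (R := k) h • p := rfl

lemma eP_nat (f : A →ₐ[k] P) (y : A ⊗[k] H) : eP H P (X1 H f y) = f (eP H A y) := by
  induction y with
  | zero => simp
  | add a b ha hb => simp only [map_add, ha, hb]
  | tmul a h => simp

lemma key (z : (P ⊗[k] H) ⊗[k] H) (y : P ⊗[k] H) (w : P) :
    muS H P (z * cP H P y * ((w ⊗ₜ 1) ⊗ₜ 1)) = muS H P (z * (((eP H P y * w) ⊗ₜ 1) ⊗ₜ 1)) := by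
  induction y with
  | zero => simp
  | add a b ha hb => simp only [map_add, mul_add, add_mul, add_tmul, ha, hb]
  | tmul p h =>
    induction z with
    | zero => simp
    | add a b ha hb => simp only [map_add, add_mul, ha, hb]
    | tmul z d =>
    induction z with
    | zero => simp
    | add a b ha hb => simp only [map_add, add_mul, add_tmul, ha, hb]
    | tmul q c =>
      have h1 : ∀ t : H ⊗[k] H,
          muS H P ((q ⊗ₜ c) ⊗ₜ d * (TensorProduct.assoc k P H H).symm (p ⊗ₜ t)
            * ((w ⊗ₜ 1) ⊗ₜ 1)) =
          (q * p * w) ⊗ₜ (c * (LinearMap.mul' k H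
            (LinearMap.lTensor H (HopfAlgebra.antipode k) t)) * HopfAlgebra.antipode k d) := by
        intro t
        induction t with
        | zero => simp
        | add a b ha hb => simp only [map_add, mul_add, add_mul, tmul_add, ha, hb]
        | tmul u v => simp [HopfAlgebra.antipode_mul_antidistrib, mul_assoc]
      rw [cP_tmul, h1, HopfAlgebra.mul_antipode_lTensor_comul_apply]
      simp [Algebra.algebraMap_eq_smul_one, mul_assoc, smul_tmul']

lemma tmul_one_mul (a b : P) : (a ⊗ₜ[k] (1 : H)) * (b ⊗ₜ 1) = (a * b) ⊗ₜ 1 := by simp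

lemma rT_gen (g : P →ₗ[k] A) (a b : P) (hab : ∀ z, g (z * a) = g (z * b)) (z : P ⊗[k] H) :
    LinearMap.rTensor H g (z * (a ⊗ₜ 1)) = LinearMap.rTensor H g (z * (b ⊗ₜ 1)) := by
  induction z with
  | zero => simp
  | add a b ha hb => simp only [map_add, add_mul, ha, hb]
  | tmul z d => simp [hab]

end gen

/-- iterated comultiplication -/
noncomputable def D3 : H →ₐ[k] (H ⊗[k] H) ⊗[k] H := (X1 H (D k H)).comp (D k H)

/-- iterated comultiplication -/
noncomputable def D4 : H →ₐ[k] ((H ⊗[k] H) ⊗[k] H) ⊗[k] H :=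
  (X1 H (X1 H (D k H))).comp (D3 k H)

lemma cP_D (x : H) : cP H H (D k H x) = D3 k H x :=
  Coalgebra.coassoc_symm_apply (R := k) x

lemma cP_D3 (x : H) : cP H (H ⊗[k] H) (D3 k H x) = D4 k H x := by
  change cP H (H ⊗[k] H) (X1 H (D k H) (D k H x)) = _
  rw [cP_nat, cP_D]; rfl

lemma X1cP_D3 (x : H) : X1 H (cP H H) (D3 k H x) = D4 k H x := by
  change X1 H (cP H H) (X1 H (D k H) (D k H x)) = X1 H _ (X1 H (D k H) (D k H x))
  rw [X1_comp, X1_comp]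
  congr 2
  ext y
  exact cP_D k H y

lemma eP_D (x : H) : eP H H (D k H x) = x := by
  change TensorProduct.rid k H (LinearMap.lTensor H (Coalgebra.counit (R := k))
    (Coalgebra.comul (R := k) x)) = x
  simp

lemma eP_D3 (x : H) : eP H (H ⊗[k] H) (D3 k H x) = D k H x := by
  change eP H (H ⊗[k] H) (X1 H (D k H) (D k H x)) = _
  rw [eP_nat, eP_D]

lemma rho_apply (e x : H) : rhoE k H e x = D k H x * (e ⊗ₜ 1) := rfl

lemma rTensor_rho (e : H) (t : H ⊗[k] H) :
    LinearMap.rTensor H (rhoE k H e) t = X1 H (D k H) t * ((e ⊗ₜ 1) ⊗ₜ 1) := by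
  induction t with
  | zero => simp
  | add a b ha hb => simp only [map_add, add_mul, ha, hb]
  | tmul a h => rw [LinearMap.rTensor_tmul, rho_apply, X1_tmul]; simp

lemma rTensor_rTensor_rho (e : H) (t : (H ⊗[k] H) ⊗[k] H) :
    LinearMap.rTensor H (LinearMap.rTensor H (rhoE k H e)) t
      = X1 H (X1 H (D k H)) t * (((e ⊗ₜ 1) ⊗ₜ 1) ⊗ₜ 1) := by
  induction t with
  | zero => simp
  | add a b ha hb => simp only [map_add, add_mul, ha, hb]
  | tmul a h => rw [LinearMap.rTensor_tmul, rTensor_rho, X1_tmul]; simp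

lemma rho2 (e x : H) : rhoE2 k H e x =
    D3 k H x * (D k H e ⊗ₜ 1) * ((e ⊗ₜ 1) ⊗ₜ 1) := by
  change LinearMap.rTensor H (rhoE k H e) (rhoE k H e x) = _
  rw [rTensor_rho, rho_apply, map_mul, X1_tmul]; rfl

lemma rho3 (e x : H) : rhoE3 k H e x =
    D4 k H x * (D3 k H e ⊗ₜ 1) * ((D k H e ⊗ₜ 1) ⊗ₜ 1) * (((e ⊗ₜ 1) ⊗ₜ 1) ⊗ₜ 1) := by
  change LinearMap.rTensor H (LinearMap.rTensor H (rhoE k H e)) (rhoE2 k H e x) = _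
  rw [rTensor_rTensor_rho, rho2, map_mul, map_mul, X1_tmul, X1_tmul, X1_tmul]; rfl

lemma pcm2R_eq : pcm2R k H = muS H (H ⊗[k] H) := rfl

lemma pcm3R_eq : pcm3R k H = LinearMap.rTensor H (muS H H) := rfl

lemma pcm2L_eq (t : (H ⊗[k] H) ⊗[k] H) :
    pcm2L k H t = muS H (H ⊗[k] H) (X1 H (cP H H) t) := by
  induction t with
  | zero => simp
  | add a b ha hb => simp only [map_add, ha, hb]
  | tmul t d =>
  induction t with
  | zero => simp
  | add a b ha hb => simp only [map_add, add_tmul, ha, hb]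
  | tmul a b => rfl

lemma pcm3L_eq (t : (H ⊗[k] H) ⊗[k] H) :
    pcm3L k H t = LinearMap.rTensor H (muS H H) (cP H (H ⊗[k] H) t) := by
  induction t with
  | zero => simp
  | add a b ha hb => simp only [map_add, ha, hb]
  | tmul t d =>
  induction t with
  | zero => simp
  | add a b ha hb => simp only [map_add, add_tmul, ha, hb]
  | tmul a b =>
    rw [cP_tmul]
    simp only [pcm3L, LinearMap.comp_apply, LinearMap.lTensor_tmul]
    induction Coalgebra.comul (R := k) d with
    | zero => simp
    | add a b ha hb => simp only [map_add, tmul_add, ha, hb]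
    | tmul u v => rfl

end PCMaux

open PCMaux

/-- if `e` is a subcentral idempotent of a Hopf algebra `H`, then
`ρ_e(x) = x₍₁₎·e ⊗ x₍₂₎` maps the left ideal `H·e` into `(H·e) ⊗ H` and satisfies the
partial comodule axioms (PCM1), (PCM2) and (PCM3) on `H·e`. -/
theorem stmt6 (e : H) (he0 : e ≠ 0) (he : e * e = e)
    (hsub : (e ⊗ₜ[k] (1 : H)) * Coalgebra.comul (R := k) e
      = Coalgebra.comul (R := k) e * (e ⊗ₜ[k] (1 : H))) :
    -- well-definedness: `ρ_e(H·e) ⊆ (H·e) ⊗ H`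
    (∀ x ∈ {y : H | ∃ h : H, y = h * e},
      rhoE k H e x ∈ Submodule.span k
        {z : H ⊗[k] H | ∃ m ∈ {y : H | ∃ h : H, y = h * e}, ∃ h' : H, z = m ⊗ₜ[k] h'})
    -- (PCM1)
    ∧ (∀ x ∈ {y : H | ∃ h : H, y = h * e}, applyCounit k H (rhoE k H e x) = x)
    -- (PCM2)
    ∧ (∀ x ∈ {y : H | ∃ h : H, y = h * e},
        pcm2L k H (rhoE2 k H e x) = pcm2R k H (rhoE3 k H e x))
    -- (PCM3)
    ∧ (∀ x ∈ {y : H | ∃ h : H, y = h * e},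
        pcm3L k H (rhoE2 k H e x) = pcm3R k H (rhoE3 k H e x)) := by
  have hD : (e ⊗ₜ[k] (1 : H)) * D k H e = D k H e * (e ⊗ₜ[k] (1 : H)) := hsub
  have hD3 : (D k H e ⊗ₜ[k] (1 : H)) * D3 k H e = D3 k H e * (D k H e ⊗ₜ[k] (1 : H)) := by
    have := congrArg (X1 H (D k H)) hD
    rwa [map_mul, map_mul, X1_tmul] at this
  have hD4 : (D3 k H e ⊗ₜ[k] (1 : H)) * D4 k H e = D4 k H e * (D3 k H e ⊗ₜ[k] (1 : H)) := by
    have := congrArg (X1 H (X1 H (D k H))) hD3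
    rwa [map_mul, map_mul, X1_tmul] at this
  refine ⟨?_, ?_, ?_, ?_⟩
  · rintro x -
    rw [rho_apply]
    induction D k H x with
    | zero => simp
    | add a b ha hb => rw [add_mul]; exact add_mem ha hb
    | tmul a b =>
      apply Submodule.subset_span
      exact ⟨a * e, ⟨a, rfl⟩, b, by simp⟩
  · rintro x ⟨h, rfl⟩
    have h1 : ∀ t : H ⊗[k] H, applyCounit k H (t * (e ⊗ₜ 1)) = eP H H t * e := by
      intro t
      induction t with
      | zero => simp
      | add a b ha hb => simp only [map_add, add_mul, ha, hb]
      | tmul a b => simp [applyCounit]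
    rw [rho_apply, h1, eP_D, mul_assoc, he]
  · rintro x ⟨h, rfl⟩
    have h1 : ∀ w : H ⊗[k] H, muS H (H ⊗[k] H)
        (D4 k H (h * e) * (D3 k H e ⊗ₜ 1) * ((w ⊗ₜ 1) ⊗ₜ 1)) =
        muS H (H ⊗[k] H) (D4 k H h * (D3 k H e ⊗ₜ 1) * (((D k H e * w) ⊗ₜ 1) ⊗ₜ 1)) := by
      intro w
      rw [map_mul (D4 k H), mul_assoc (D4 k H h), ← hD4, ← mul_assoc (D4 k H h), ← cP_D3 k H e, key, eP_D3]
    have h2 : ((D k H e ⊗ₜ[k] (1 : H)) ⊗ₜ[k] (1 : H)) * (((e ⊗ₜ 1) ⊗ₜ 1) ⊗ₜ 1)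
        = ((D k H e * (e ⊗ₜ 1)) ⊗ₜ 1) ⊗ₜ 1 := by simp
    rw [pcm2L_eq, rho2, rho3, pcm2R_eq,
      map_mul (X1 H (cP (k := k) H H)), map_mul (X1 H (cP (k := k) H H)), X1_tmul, X1_tmul, X1cP_D3, cP_D,
      cP_tmul_one, h1, mul_assoc (D4 k H (h * e) * _), h2, h1, ← mul_assoc (D k H e),
      ← map_mul, he]
  · rintro x -
    have h1 : ∀ z : ((H ⊗[k] H) ⊗[k] H) ⊗[k] H,
        LinearMap.rTensor H (muS H H) (z * ((D k H e ⊗ₜ 1) ⊗ₜ 1) * (((e ⊗ₜ 1) ⊗ₜ 1) ⊗ₜ 1)) =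
        LinearMap.rTensor H (muS H H) (z * (D3 k H e ⊗ₜ 1) * ((D k H e ⊗ₜ 1) ⊗ₜ 1)
          * (((e ⊗ₜ 1) ⊗ₜ 1) ⊗ₜ 1)) := by
      intro z
      have h2 := rT_gen H (muS H H) ((D k H e ⊗ₜ 1) * ((e ⊗ₜ 1) ⊗ₜ 1))
        (D3 k H e * (D k H e ⊗ₜ 1) * ((e ⊗ₜ 1) ⊗ₜ 1)) (fun z' => by
          rw [← hD3, ← mul_assoc, ← mul_assoc, ← mul_assoc, ← cP_D k H e, key, eP_D, he]) z
      rw [← tmul_one_mul, ← tmul_one_mul, ← tmul_one_mul] at h2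
      simpa only [← mul_assoc] using h2
    rw [pcm3L_eq, rho2, rho3, pcm3R_eq, map_mul (cP H (H ⊗[k] H)), map_mul (cP H (H ⊗[k] H)), cP_D3, cP_tmul_one, cP_tmul_one, h1]
end

section
/- Let H be a Hopf algebra over a field k, let e ∈ H be a subcentral idempotent, let A_e be the smallest right coideal subalgebra of H containing e, and let π : H → H/(H·A_e⁺) be the canonical k-linear quotient map. Then {x ∈ H·e : (π ⊗ id)(Δ(x)) = π(1_H) ⊗ x} = {a·e : a ∈ H with (π ⊗ id)(Δ(a)) = π(1_H) ⊗ a}; that is, the coinvariant elements of the left ideal H·e are exactly the products a·e where a runs through the coinvariants of H. -/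
open TensorProduct

/-- let `e ∈ H` be a subcentral idempotent, `A` the smallest right coideal
subalgebra containing `e`, and `π : H → H/(H·A⁺)` the quotient map. Then the coinvariant
elements of the left ideal `H·e` are exactly the products `a·e` where `a` runs through
the coinvariants of `H`. -/
theorem stmt7 (k H : Type*) [Field k] [Ring H] [HopfAlgebra k H]
    (e : H) (he0 : e ≠ 0) (he : e * e = e)
    (hsub : (e ⊗ₜ[k] (1 : H)) * Coalgebra.comul (R := k) e
      = Coalgebra.comul (R := k) e * (e ⊗ₜ[k] (1 : H)))
    (A : Subalgebra k H)
    (hA : ∀ a ∈ A, Coalgebra.comul (R := k) a ∈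
      Submodule.span k {x : H ⊗[k] H | ∃ b ∈ A, ∃ h : H, x = b ⊗ₜ[k] h})
    (heA : e ∈ A)
    (hmin : ∀ A' : Subalgebra k H,
      (∀ a ∈ A', Coalgebra.comul (R := k) a ∈
        Submodule.span k {x : H ⊗[k] H | ∃ b ∈ A', ∃ h : H, x = b ⊗ₜ[k] h}) →
      e ∈ A' → A ≤ A')
    (B : Submodule k H)
    (hB : B = Submodule.span k {x : H | ∃ (h : H) (a : H), a ∈ A
      ∧ Coalgebra.counit (R := k) a = 0 ∧ x = h * a}) :
    {x : H | (∃ h : H, x = h * e) ∧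
        TensorProduct.map B.mkQ LinearMap.id (Coalgebra.comul (R := k) x) = B.mkQ 1 ⊗ₜ[k] x}
    = {x : H | ∃ a : H,
        TensorProduct.map B.mkQ LinearMap.id (Coalgebra.comul (R := k) a) = B.mkQ 1 ⊗ₜ[k] a
        ∧ x = a * e} := by
  have hπ : ∀ z b : H, b ∈ A → B.mkQ (z * b) = Coalgebra.counit (R := k) b • B.mkQ z := by
    intro z b hb
    rw [← map_smul, ← sub_eq_zero, ← map_sub, Submodule.mkQ_apply, Submodule.Quotient.mk_eq_zero,
      hB]
    refine Submodule.subset_span ⟨z, b - algebraMap k H (Coalgebra.counit (R := k) b),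
      A.sub_mem hb (A.algebraMap_mem _), ?_, ?_⟩
    · rw [map_sub, Bialgebra.counit_algebraMap, sub_self]
    · rw [mul_sub, ← Algebra.commutes, ← Algebra.smul_def]
  have key : ∀ y ∈ Submodule.span k {x : H ⊗[k] H | ∃ b ∈ A, ∃ h : H, x = b ⊗ₜ[k] h},
      ∀ z : H ⊗[k] H, TensorProduct.map B.mkQ LinearMap.id (z * y)
        = TensorProduct.map LinearMap.id (LinearMap.mulRight k
            (TensorProduct.lid k H ((Coalgebra.counit (R := k) (A := H)).rTensor H y)))
          (TensorProduct.map B.mkQ LinearMap.id z) := by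
    intro y hy z
    induction z using TensorProduct.induction_on with
    | zero => simp
    | add z w hz hw => rw [add_mul, map_add, map_add, map_add, hz, hw]
    | tmul u v =>
      induction hy using Submodule.span_induction with
      | mem y hy =>
        obtain ⟨b, hb, h, rfl⟩ := hy
        rw [Algebra.TensorProduct.tmul_mul_tmul, TensorProduct.map_tmul, hπ u b hb]
        simp [TensorProduct.smul_tmul]
      | zero => simp
      | add y w _ _ hy hw =>
        rw [mul_add, map_add, hy, hw]
        simp [mul_add, TensorProduct.tmul_add]
      | smul c y _ hy =>
        rw [mul_smul_comm, map_smul, hy]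
        simp
  ext x
  constructor
  · rintro ⟨⟨h, rfl⟩, hx⟩
    exact ⟨h * e, hx, by rw [mul_assoc, he]⟩
  · rintro ⟨a, ha, rfl⟩
    refine ⟨⟨a, rfl⟩, ?_⟩
    rw [Bialgebra.comul_mul, key _ (hA e heA), ha, Coalgebra.rTensor_counit_comul]
    simp
end

section
/- Let H be a Hopf algebra over a field k and let e ∈ H satisfy e·e_{(1)} ⊗ e_{(2)} = e ⊗ e = e_{(1)}·e ⊗ e_{(2)} in H ⊗ H. Let A be the smallest right coideal subalgebra of H containing e. Then: (i) e is a two-sided integral for A, i.e. a·e = ε(a)·e = e·a for all a ∈ A; (ii) for all x, y ∈ H with x − y ∈ H·A⁺ one has x·e = y·e. -/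
open TensorProduct

noncomputable def sliceR (k : Type*) {H : Type*} [Field k] [Ring H] [HopfAlgebra k H]
    (f : H →ₗ[k] k) : H ⊗[k] H →ₗ[k] H :=
  (TensorProduct.rid k H).toLinearMap ∘ₗ LinearMap.lTensor H f

theorem sliceR_tmul (k : Type*) {H : Type*} [Field k] [Ring H] [HopfAlgebra k H]
    (f : H →ₗ[k] k) (x y : H) : sliceR k f (x ⊗ₜ[k] y) = f y • x := by
  simp [sliceR]

theorem sliceR_comul (k : Type*) {H : Type*} [Field k] [Ring H] [HopfAlgebra k H]
    (f : H →ₗ[k] k) (t : H ⊗[k] H) :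
    Coalgebra.comul (R := k) (sliceR k f t) =
      LinearMap.lTensor H (sliceR k f) (TensorProduct.assoc k H H H
        (LinearMap.rTensor H (Coalgebra.comul (R := k)) t)) := by
  induction t with
  | zero => simp
  | add x y hx hy => simp only [map_add, hx, hy]
  | tmul x y =>
    rw [sliceR_tmul, map_smul, LinearMap.rTensor_tmul]
    generalize Coalgebra.comul (R := k) x = u
    induction u with
    | zero => simp
    | add x y hx hy => simp only [map_add, smul_add, TensorProduct.add_tmul, hx, hy]
    | tmul a b => simp [sliceR_tmul]

theorem mem_span_sliceR (k : Type*) {H : Type*} [Field k] [Ring H] [HopfAlgebra k H]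
    (t : H ⊗[k] H) : t ∈ Submodule.span k
      {x : H ⊗[k] H | ∃ f : H →ₗ[k] k, ∃ h : H, x = (sliceR k f t) ⊗ₜ[k] h} := by
  classical
  obtain ⟨c, hc⟩ := TensorProduct.eq_repr_basis_right (Module.Basis.ofVectorSpace k H) t
  have key : ∀ i, sliceR k ((Module.Basis.ofVectorSpace k H).coord i) t = c i := by
    intro i
    rw [← hc, Finsupp.sum, map_sum]
    simp only [sliceR_tmul, Module.Basis.coord_apply, Module.Basis.repr_self,
      Finsupp.single_apply]
    simp +contextual [eq_comm]
  nth_rewrite 2 [← hc]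
  rw [Finsupp.sum]
  apply Submodule.sum_mem
  intro i _
  apply Submodule.subset_span
  exact ⟨(Module.Basis.ofVectorSpace k H).coord i, Module.Basis.ofVectorSpace k H i,
    by rw [key i]⟩

/-- let `e ∈ H` satisfy `e·e₍₁₎ ⊗ e₍₂₎ = e ⊗ e = e₍₁₎·e ⊗ e₍₂₎` and let `A`
be the smallest right coideal subalgebra of `H` containing `e`. Then (i) `e` is a two-sided
integral for `A`: `a·e = ε(a)·e = e·a` for all `a ∈ A`; and (ii) if `x − y ∈ H·A⁺` then
`x·e = y·e`. -/
theorem stmt14 (k H : Type*) [Field k] [Ring H] [HopfAlgebra k H]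
    (e : H)
    (h1 : (e ⊗ₜ[k] (1 : H)) * Coalgebra.comul (R := k) e = e ⊗ₜ[k] e)
    (h2 : Coalgebra.comul (R := k) e * (e ⊗ₜ[k] (1 : H)) = e ⊗ₜ[k] e)
    (A : Subalgebra k H)
    (hA : ∀ a ∈ A, Coalgebra.comul (R := k) a ∈
      Submodule.span k {x : H ⊗[k] H | ∃ b ∈ A, ∃ h : H, x = b ⊗ₜ[k] h})
    (heA : e ∈ A)
    (hmin : ∀ A' : Subalgebra k H,
      (∀ a ∈ A', Coalgebra.comul (R := k) a ∈
        Submodule.span k {x : H ⊗[k] H | ∃ b ∈ A', ∃ h : H, x = b ⊗ₜ[k] h}) →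
      e ∈ A' → A ≤ A') :
    (∀ a ∈ A, a * e = Coalgebra.counit (R := k) a • e
      ∧ e * a = Coalgebra.counit (R := k) a • e)
    ∧ (∀ x y : H,
        x - y ∈ Submodule.span k {z : H | ∃ (h : H) (a : H), a ∈ A
          ∧ Coalgebra.counit (R := k) a = 0 ∧ z = h * a} →
        x * e = y * e) := by
  let L : Set H := {a | ∃ f : H →ₗ[k] k, a = sliceR k f (Coalgebra.comul (R := k) e)}
  have hint : ∀ a ∈ Algebra.adjoin k L, a * e = Coalgebra.counit (R := k) a • e
      ∧ e * a = Coalgebra.counit (R := k) a • e := by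
    intro a ha
    induction ha using Algebra.adjoin_induction with
    | mem x hx =>
      obtain ⟨f, rfl⟩ := hx
      have e1 : ∀ t : H ⊗[k] H, sliceR k f t * e = sliceR k f (t * (e ⊗ₜ[k] (1 : H))) := by
        intro t
        induction t with
        | zero => simp
        | add x y hx hy => simp only [map_add, add_mul, hx, hy]
        | tmul a b => simp [sliceR_tmul]
      have e2 : ∀ t : H ⊗[k] H, e * sliceR k f t = sliceR k f ((e ⊗ₜ[k] (1 : H)) * t) := by
        intro t
        induction t with
        | zero => simp
        | add x y hx hy => simp only [map_add, mul_add, hx, hy]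
        | tmul a b => simp [sliceR_tmul]
      have e3 : ∀ t : H ⊗[k] H, Coalgebra.counit (R := k) (sliceR k f t) =
          f (TensorProduct.lid k H (LinearMap.rTensor H (Coalgebra.counit (R := k)) t)) := by
        intro t
        induction t with
        | zero => simp
        | add x y hx hy => simp only [map_add, hx, hy]
        | tmul a b => simp [sliceR_tmul, mul_comm]
      rw [e1, e2, e3, h1, h2, Coalgebra.rTensor_counit_comul, sliceR_tmul]
      simp
    | algebraMap r => simp [Algebra.algebraMap_eq_smul_one]
    | add x y _ _ hx hy => simp [add_mul, mul_add, add_smul, hx.1, hx.2, hy.1, hy.2]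
    | mul x y _ _ hx hy =>
      refine ⟨?_, ?_⟩
      · rw [mul_assoc, hy.1, mul_smul_comm, hx.1, smul_smul, Bialgebra.counit_mul, mul_comm]
      · rw [← mul_assoc, hx.2, smul_mul_assoc, hy.2, smul_smul, Bialgebra.counit_mul]
  have hco : ∀ a ∈ Algebra.adjoin k L, Coalgebra.comul (R := k) a ∈
      Submodule.span k {x : H ⊗[k] H | ∃ b ∈ Algebra.adjoin k L, ∃ h : H, x = b ⊗ₜ[k] h} := by
    intro a ha
    induction ha using Algebra.adjoin_induction with
    | mem x hx =>
      obtain ⟨f, rfl⟩ := hx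
      rw [sliceR_comul, Coalgebra.coassoc_apply]
      have := mem_span_sliceR k (Coalgebra.comul (R := k) e)
      have hm : ∀ t ∈ Submodule.span k {x : H ⊗[k] H | ∃ f : H →ₗ[k] k, ∃ h : H,
          x = (sliceR k f (Coalgebra.comul (R := k) e)) ⊗ₜ[k] h},
          LinearMap.lTensor H (sliceR k f) (LinearMap.lTensor H (Coalgebra.comul (R := k)) t) ∈
          Submodule.span k
            {x : H ⊗[k] H | ∃ b ∈ Algebra.adjoin k L, ∃ h : H, x = b ⊗ₜ[k] h} := by
        intro t ht
        induction ht using Submodule.span_induction with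
        | mem x hx =>
          obtain ⟨g, h, rfl⟩ := hx
          refine Submodule.subset_span ⟨_, Algebra.subset_adjoin ⟨g, rfl⟩,
            sliceR k f (Coalgebra.comul (R := k) h), ?_⟩
          simp
        | zero => simp
        | add x y _ _ hx hy => simpa only [map_add] using Submodule.add_mem _ hx hy
        | smul r x _ hx => simpa only [map_smul] using Submodule.smul_mem _ r hx
      exact hm _ this
    | algebraMap r =>
      rw [Algebra.algebraMap_eq_smul_one, map_smul, Bialgebra.comul_one]
      exact Submodule.smul_mem _ _ (Submodule.subset_span ⟨1, one_mem _, 1, rfl⟩)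
    | add x y _ _ hx hy => simpa only [map_add] using Submodule.add_mem _ hx hy
    | mul x y _ _ hx hy =>
      rw [Bialgebra.comul_mul]
      have := Submodule.mul_mem_mul hx hy
      rw [Submodule.span_mul_span] at this
      refine Submodule.span_mono ?_ this
      rintro _ ⟨_, ⟨b, hb, h, rfl⟩, _, ⟨b', hb', h', rfl⟩, rfl⟩
      exact ⟨b * b', mul_mem hb hb', h * h', by simp⟩
  have heL : e ∈ Algebra.adjoin k L := by
    refine Algebra.subset_adjoin ⟨Coalgebra.counit (R := k), ?_⟩
    simp [sliceR]
  have hle := hmin _ hco heL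
  have hi := fun a ha => hint a (hle ha)
  refine ⟨hi, fun x y hxy => ?_⟩
  rw [← sub_eq_zero, ← sub_mul]
  generalize x - y = z at hxy
  induction hxy using Submodule.span_induction with
  | mem x hx =>
    obtain ⟨h, a, ha, h0, rfl⟩ := hx
    rw [mul_assoc, (hi a ha).1, h0, zero_smul, mul_zero]
  | zero => simp
  | add x y _ _ hx hy => rw [add_mul, hx, hy, add_zero]
  | smul r x _ hx => rw [smul_mul_assoc, hx, smul_zero]
end

section
/- Let K be a finite group and k a field whose characteristic does not divide |K|. Let e be a central idempotent of the group algebra kK and let I := (kK)·e. Define χ : K → k by letting χ(h) be the trace of the k-linear endomorphism of I given by left multiplication by h. Then e = |K|⁻¹ · Σ_{h ∈ K} χ(h⁻¹)·h in kK. -/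
open MonoidAlgebra

/-- The left ideal `(kK)·e` of the group algebra, as a `k`-submodule. -/
noncomputable def idealI (k K : Type*) [Field k] [Group K] (e : MonoidAlgebra k K) :
    Submodule k (MonoidAlgebra k K) :=
  LinearMap.range (LinearMap.mulRight k e)

/-- The character `χ : K → k`, `χ(h) :=` trace of the `k`-linear endomorphism of
`I = (kK)·e` given by left multiplication by `h`. -/
noncomputable def chi (k K : Type*) [Field k] [Group K] (e : MonoidAlgebra k K) (h : K) : k :=
  LinearMap.trace k (idealI k K e)
    ((LinearMap.mulLeft k (MonoidAlgebra.of k K h)).restrict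
      (p := idealI k K e) (q := idealI k K e)
      (fun x hx => by
        obtain ⟨a, rfl⟩ := LinearMap.mem_range.mp hx
        exact LinearMap.mem_range.mpr
          ⟨MonoidAlgebra.of k K h * a, by
            simp only [LinearMap.mulRight_apply, LinearMap.mulLeft_apply, mul_assoc]⟩))

theorem chi_inv_eq (k K : Type*) [Field k] [Group K] [Fintype K]
    (e : MonoidAlgebra k K)
    (hidem : e * e = e)
    (hcentral : ∀ x : MonoidAlgebra k K, e * x = x * e) (h : K) :
    chi k K e h⁻¹ = (Fintype.card K : k) * e.coeff h := by
  classical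
  have hfin : Module.Finite k (MonoidAlgebra k K) :=
    Module.Finite.of_basis (MonoidAlgebra.basis K k)
  have hfinI : Module.Finite k (LinearMap.range (LinearMap.mulRight k e)) := inferInstance
  have key : chi k K e h⁻¹ = LinearMap.trace k (MonoidAlgebra k K)
      ((LinearMap.mulLeft k (MonoidAlgebra.of k K h⁻¹) ∘ₗ
        (LinearMap.range (LinearMap.mulRight k e)).subtype) ∘ₗ
        (LinearMap.mulRight k e).rangeRestrict) := by
    rw [LinearMap.trace_comp_comm']
    unfold chi
    change LinearMap.trace k (LinearMap.range (LinearMap.mulRight k e)) _ = _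
    congr 1
    refine LinearMap.ext fun x => ?_
    obtain ⟨x, a, rfl⟩ := x
    apply Subtype.ext
    change MonoidAlgebra.of k K h⁻¹ * (a * e) = MonoidAlgebra.of k K h⁻¹ * (a * e) * e
    rw [mul_assoc, mul_assoc, hidem]
  rw [key, LinearMap.trace_eq_matrix_trace k (MonoidAlgebra.basis K k), Matrix.trace]
  have : ∀ g : K, (LinearMap.toMatrix (MonoidAlgebra.basis K k) (MonoidAlgebra.basis K k)
      ((LinearMap.mulLeft k (MonoidAlgebra.of k K h⁻¹) ∘ₗ
        (LinearMap.range (LinearMap.mulRight k e)).subtype) ∘ₗ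
        (LinearMap.mulRight k e).rangeRestrict)).diag g = e.coeff h := by
    intro g
    rw [Matrix.diag_apply, LinearMap.toMatrix_apply]
    change (MonoidAlgebra.single h⁻¹ 1 * (MonoidAlgebra.single g 1 * e)).coeff g = e.coeff h
    rw [← hcentral]
    simp
  rw [Finset.sum_congr rfl (fun g _ => this g)]
  simp

/-- let `K` be a finite group, `k` a field with `char k ∤ |K|`, `e` a central
idempotent of `kK` and `I := (kK)·e`. If `χ(h)` denotes the trace of left multiplication by
`h` on `I`, then `e = |K|⁻¹ · Σ_{h ∈ K} χ(h⁻¹)·h`. -/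
theorem stmt16 (k K : Type*) [Field k] [Group K] [Fintype K]
    (hchar : (Fintype.card K : k) ≠ 0)
    (e : MonoidAlgebra k K)
    (hidem : e * e = e)
    (hcentral : ∀ x : MonoidAlgebra k K, e * x = x * e) :
    e = (Fintype.card K : k)⁻¹ •
          ∑ h : K, chi k K e h⁻¹ • MonoidAlgebra.of k K h := by
  classical
  ext g
  simp only [chi_inv_eq k K e hidem hcentral]
  simp [MonoidAlgebra.coeff_sum, Finsupp.single_apply, hchar, mul_ite]
end
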